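/- Let c ≥ 1, let p be a nonnegative integer, and for each multi-index α with |α| ≤ p let μ_α be a complex Radon measure on [−c,c]². Define φ(x,y) = Σ_{|α|≤p} (x,y)^α ∫_{[−c,c]²} e^{i(ξ₁x + ξ₂y)} dμ_α(ξ₁,ξ₂) and set M = max_{|α|≤p} |μ_α|([−c,c]²), where |μ_α| denotes the total variation. Then there exists a constant C(p), depending only on p, such that for all nonnegative integers m, n: (i) if min{m,n} ≥ p, then |∫_{−1}^{1}∫_{−1}^{1} φ(x,y) P_m(x) P_n(y) dx dy| ≤ C(p) · M · (c/2)^{m+n+p} / (Γ(m−p+1) Γ(n−p+1)); and (ii) if p' := max{m,n} ≥ p, then |∫_{−1}^{1}∫_{−1}^{1} φ(x,y) P_m(x) P_n(y) dx dy| ≤ C(p) · M · (c/2)^{p'+p} / Γ(p'−p+1). -/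

import Mathlib

open MeasureTheory Real

noncomputable section

/-- The Legendre polynomial of degree `n`, via Rodrigues' formula. -/
def legendreP (n : ℕ) (x : ℝ) : ℝ :=
  (1 / (2 ^ n * (n.factorial : ℝ))) * iteratedDeriv n (fun t : ℝ => (t ^ 2 - 1) ^ n) x

/-- The multi-indices `α = (α₁,α₂)` with `|α| ≤ p`. -/
def multiIdx (p : ℕ) : Finset (ℕ × ℕ) :=
  (Finset.range (p + 1) ×ˢ Finset.range (p + 1)).filter (fun α : ℕ × ℕ => α.1 + α.2 ≤ p)

open Polynomial in
lemma ibp_aux (q : ℝ[X]) (k : ℕ) : ∀ (f : ℝ → ℂ), ContDiff ℝ ⊤ f →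
    (∀ j < k, (derivative^[j] q).eval 1 = 0 ∧ (derivative^[j] q).eval (-1) = 0) →
    ∫ x in (-1:ℝ)..1, (((derivative^[k] q).eval x : ℝ) : ℂ) * f x =
      (-1) ^ k * ∫ x in (-1:ℝ)..1, ((q.eval x : ℝ) : ℂ) * iteratedDeriv k f x := by
  induction k with
  | zero => intro f _ _; simp
  | succ k ih =>
    intro f hf h
    have hf' : ContDiff ℝ ⊤ (deriv f) := by
      have := (contDiff_succ_iff_deriv (𝕜 := ℝ) (n := ⊤) (f := f)).1 (by simpa using hf)
      exact this.2.2
    have e := intervalIntegral.integral_deriv_mul_eq_sub (a := -1) (b := 1)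
      (u := fun x : ℝ => (((derivative^[k] q).eval x : ℝ) : ℂ)) (v := f)
      (u' := fun x : ℝ => (((derivative^[k+1] q).eval x : ℝ) : ℂ)) (v' := deriv f)
      (fun x _ => by
        rw [Function.iterate_succ_apply']
        exact ((derivative^[k] q).hasDerivAt x).ofReal_comp)
      (fun x _ => (hf.differentiable (by simp) x).hasDerivAt)
      (Continuous.intervalIntegrable (Complex.continuous_ofReal.comp (Polynomial.continuous _)) _ _)
      (hf'.continuous.intervalIntegrable _ _)
    have c0 : Continuous fun x : ℝ => (((derivative^[k] q).eval x : ℝ) : ℂ) :=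
      Complex.continuous_ofReal.comp (Polynomial.continuous _)
    have c1 : Continuous fun x : ℝ => (((derivative^[k+1] q).eval x : ℝ) : ℂ) :=
      Complex.continuous_ofReal.comp (Polynomial.continuous _)
    have i1 : IntervalIntegrable (fun x : ℝ => (((derivative^[k+1] q).eval x : ℝ) : ℂ) * f x)
        volume (-1) 1 := (c1.mul hf.continuous).intervalIntegrable _ _
    have i0 : IntervalIntegrable (fun x : ℝ => (((derivative^[k] q).eval x : ℝ) : ℂ) * deriv f x)
        volume (-1) 1 := (c0.mul hf'.continuous).intervalIntegrable _ _
    rw [intervalIntegral.integral_add i1 i0] at e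
    have h1 := h k (Nat.lt_succ_self k)
    rw [h1.1, h1.2] at e
    have e2 := ih (deriv f) hf' (fun j hj => h j (hj.trans (Nat.lt_succ_self k)))
    rw [e2] at e
    rw [iteratedDeriv_succ', pow_succ]
    simp only [Complex.ofReal_zero, zero_mul, sub_zero] at e
    linear_combination e

open Polynomial in
def rodP (n : ℕ) : ℝ[X] := (X ^ 2 - 1) ^ n

open Polynomial in
lemma iterDeriv_poly (q : ℝ[X]) (n : ℕ) :
    iteratedDeriv n (fun x : ℝ => q.eval x) = fun x => (derivative^[n] q).eval x := by
  induction n with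
  | zero => simp
  | succ n ih =>
    rw [iteratedDeriv_succ, ih]; ext x
    rw [Polynomial.deriv, Function.iterate_succ_apply']

open Polynomial in
lemma iterDeriv_polyC (q : ℝ[X]) (n : ℕ) :
    iteratedDeriv n (fun x : ℝ => ((q.eval x : ℝ) : ℂ)) =
      fun x => (((derivative^[n] q).eval x : ℝ) : ℂ) := by
  induction n with
  | zero => simp
  | succ n ih =>
    rw [iteratedDeriv_succ, ih]; ext x
    rw [Function.iterate_succ_apply']
    exact (((derivative^[n] q).hasDerivAt x).ofReal_comp).deriv

open Polynomial in
lemma legendreP_eq (n : ℕ) (x : ℝ) :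
    legendreP n x = (1 / (2 ^ n * (n.factorial : ℝ))) * (derivative^[n] (rodP n)).eval x := by
  unfold legendreP
  have : (fun t : ℝ => (t ^ 2 - 1) ^ n) = fun t => (rodP n).eval t := by
    ext t; simp [rodP]
  rw [this, iterDeriv_poly]

lemma legendreP_cont (n : ℕ) : Continuous (legendreP n) := by
  have : legendreP n = fun x => (1 / (2 ^ n * (n.factorial : ℝ))) *
      ((Polynomial.derivative)^[n] (rodP n)).eval x := funext (legendreP_eq n)
  rw [this]
  exact continuous_const.mul (Polynomial.continuous _)

open Polynomial in
lemma rod_vanish (n j : ℕ) (hj : j < n) :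
    (derivative^[j] (rodP n)).eval 1 = 0 ∧ (derivative^[j] (rodP n)).eval (-1) = 0 := by
  have key : (X ^ 2 - 1 : ℝ[X]) ∣ derivative^[j] (rodP n) := by
    have h := Polynomial.pow_sub_dvd_iterate_derivative_pow (X ^ 2 - 1 : ℝ[X]) n j
    exact (dvd_pow_self _ (by omega)).trans h
  obtain ⟨r, hr⟩ := key
  rw [hr]; constructor <;> simp

lemma rod_abs (n : ℕ) (x : ℝ) (hx : x ∈ Set.Ioc (-1:ℝ) 1) : |(rodP n).eval x| ≤ 1 := by
  simp only [rodP, Polynomial.eval_pow, Polynomial.eval_sub, Polynomial.eval_X,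
    Polynomial.eval_one, abs_pow]
  refine pow_le_one₀ (abs_nonneg _) ?_
  rw [abs_le]; constructor <;> nlinarith [hx.1, hx.2]

open Polynomial in
lemma legendre_ibp (n : ℕ) (f : ℝ → ℂ) (hf : ContDiff ℝ ⊤ f) (B : ℝ)
    (hB : ∀ x ∈ Set.Ioc (-1:ℝ) 1, ‖iteratedDeriv n f x‖ ≤ B) :
    ‖∫ x in (-1:ℝ)..1, (legendreP n x : ℂ) * f x‖ ≤ 2 * (B / (2 ^ n * n.factorial)) := by
  have h := ibp_aux (rodP n) n f hf (fun j hj => rod_vanish n j hj)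
  have e : ∫ x in (-1:ℝ)..1, (legendreP n x : ℂ) * f x =
      ((1 / (2 ^ n * (n.factorial : ℝ)) : ℝ) : ℂ) *
      ∫ x in (-1:ℝ)..1, (((derivative^[n] (rodP n)).eval x : ℝ) : ℂ) * f x := by
    rw [← intervalIntegral.integral_const_mul]
    congr 1; ext x; rw [legendreP_eq]; push_cast; ring
  rw [e, h, norm_mul, norm_mul, norm_pow, norm_neg, norm_one, one_pow, one_mul]
  have h2 := intervalIntegral.norm_integral_le_of_norm_le_const (a := -1) (b := 1) (C := B)
    (f := fun x : ℝ => (((rodP n).eval x : ℝ) : ℂ) * iteratedDeriv n f x) (fun x hx => by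
      rw [Set.uIoc_of_le (by norm_num)] at hx
      rw [norm_mul, Complex.norm_real, Real.norm_eq_abs]
      have := mul_le_mul (rod_abs n x hx) (hB x hx) (norm_nonneg _) zero_le_one
      linarith)
  have h3 : |(1:ℝ) - -1| = 2 := by norm_num
  rw [h3] at h2
  rw [Complex.norm_real, Real.norm_eq_abs, abs_of_nonneg (by positivity)]
  calc _ ≤ 1 / (2 ^ n * (n.factorial : ℝ)) * (B * 2) := by gcongr
    _ = _ := by ring

open Polynomial in
lemma rod_top (n : ℕ) (x : ℝ) :
    (derivative^[n] (derivative^[n] (rodP n))).eval x = ((2 * n).factorial : ℝ) := by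
  rw [← Function.iterate_add_apply, ← two_mul]
  have hm : (X ^ 2 - 1 : ℝ[X]).Monic := by
    have := monic_X_pow_sub_C (1:ℝ) (n := 2) (by norm_num)
    simpa using this
  have hd : (X ^ 2 - 1 : ℝ[X]).natDegree = 2 := by
    have := natDegree_X_pow_sub_C (n := 2) (r := (1:ℝ))
    simpa using this
  have hM : (rodP n).Monic := hm.pow n
  have hD : (rodP n).natDegree = 2 * n := by
    rw [rodP, hm.natDegree_pow, hd]; ring
  have : derivative^[2 * n] (rodP n) = C ((2 * n).factorial : ℝ) := by
    have h1 : (derivative^[2 * n] (rodP n)).natDegree = 0 := by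
      have := natDegree_iterate_derivative (rodP n) (2 * n)
      omega
    rw [eq_C_of_natDegree_eq_zero h1, coeff_iterate_derivative]
    have : (rodP n).coeff (2 * n) = 1 := by rw [← hD]; exact hM
    simp [this, Nat.descFactorial_self]
  rw [this, eval_C]

lemma poly_cd (q : Polynomial ℝ) : ContDiff ℝ ⊤ (fun x : ℝ => q.eval x) := by
  simpa using Polynomial.contDiff_aeval (R := ℝ) (𝕜 := ℝ) q ⊤

open Polynomial in
lemma legendre_L2 (n : ℕ) : ∫ x in (-1:ℝ)..1, (legendreP n x) ^ 2 ≤ 2 := by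
  have h := legendre_ibp n (fun x : ℝ => (((C (1 / (2 ^ n * (n.factorial : ℝ))) *
    derivative^[n] (rodP n)).eval x : ℝ) : ℂ))
    (Complex.ofRealCLM.contDiff.comp (poly_cd _))
    ((2 * n).factorial / (2 ^ n * n.factorial)) (fun x _ => by
      rw [iterDeriv_polyC]
      simp only [iterate_derivative_C_mul, eval_mul, eval_C]
      rw [rod_top, Complex.norm_real, Real.norm_eq_abs, abs_of_nonneg (by positivity)]
      apply le_of_eq; ring)
  have e : (∫ x in (-1:ℝ)..1, (legendreP n x : ℂ) * (((C (1 / (2 ^ n * (n.factorial : ℝ))) *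
    derivative^[n] (rodP n)).eval x : ℝ) : ℂ)) =
      ((∫ x in (-1:ℝ)..1, (legendreP n x) ^ 2 : ℝ) : ℂ) := by
    rw [← intervalIntegral.integral_ofReal]
    congr 1; ext x
    rw [eval_mul, eval_C, ← legendreP_eq]; push_cast; ring
  rw [e, Complex.norm_real, Real.norm_eq_abs] at h
  refine (le_abs_self _).trans (h.trans ?_)
  have : (((2 * n).factorial : ℝ) / (2 ^ n * n.factorial) / (2 ^ n * n.factorial)) ≤ 1 := by
    rw [div_div, div_le_one (by positivity)]
    have h1 : n.centralBinom * n.factorial * n.factorial = (2 * n).factorial := by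
      have := Nat.choose_mul_factorial_mul_factorial (n := 2 * n) (k := n) (by omega)
      rw [show 2 * n - n = n by omega] at this
      exact this
    have h2 : n.centralBinom ≤ 4 ^ n := by
      have := Nat.choose_le_two_pow (2 * n) n
      rw [pow_mul] at this; exact this
    have h3 : (n.centralBinom : ℝ) ≤ 4 ^ n := by exact_mod_cast h2
    rw [← h1]; push_cast
    calc _ ≤ (4:ℝ) ^ n * n.factorial * n.factorial := by gcongr
      _ = _ := by rw [show (4:ℝ) = 2 * 2 by norm_num, mul_pow]; ring
  linarith

lemma legendre_L1 (n : ℕ) : ∫ x in (-1:ℝ)..1, |legendreP n x| ≤ 2 := by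
  have h1 : ∫ x in (-1:ℝ)..1, |legendreP n x| ≤ ∫ x in (-1:ℝ)..1, (1/2 + 1/2 * legendreP n x ^ 2) := by
    apply intervalIntegral.integral_mono (by norm_num)
    · exact ((legendreP_cont n).abs).intervalIntegrable _ _
    · exact (continuous_const.add (continuous_const.mul ((legendreP_cont n).pow 2))).intervalIntegrable _ _
    · intro x
      simp only
      nlinarith [sq_nonneg (|legendreP n x| - 1), sq_abs (legendreP n x)]
  have i1 : IntervalIntegrable (fun x : ℝ => 1 / 2 * legendreP n x ^ 2) volume (-1) 1 :=
    (continuous_const.mul ((legendreP_cont n).pow 2)).intervalIntegrable _ _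
  rw [intervalIntegral.integral_add (by simp) i1, intervalIntegral.integral_const_mul] at h1
  have := legendre_L2 n
  simp at h1
  linarith

/-- one-dimensional coefficient -/
def coef (n a : ℕ) (t : ℝ) : ℂ :=
  ∫ x in (-1:ℝ)..1, (legendreP n x : ℂ) * ((x : ℂ) ^ a * Complex.exp (Complex.I * ((t * x : ℝ) : ℂ)))

lemma norm_exp_I (s : ℝ) : ‖Complex.exp (Complex.I * (s : ℂ))‖ = 1 := by
  rw [mul_comm]; exact Complex.norm_exp_ofReal_mul_I s

lemma coef_le_two (n a : ℕ) (t : ℝ) : ‖coef n a t‖ ≤ 2 := by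
  refine le_trans ?_ (legendre_L1 n)
  refine intervalIntegral.norm_integral_le_of_norm_le (by norm_num) ?_
    (((legendreP_cont n).abs).intervalIntegrable _ _)
  refine Filter.Eventually.of_forall fun x hx => ?_
  rw [norm_mul, norm_mul, norm_exp_I, norm_pow, Complex.norm_real, Complex.norm_real,
    Real.norm_eq_abs, Real.norm_eq_abs, mul_one]
  have : |x| ^ a ≤ 1 := pow_le_one₀ (abs_nonneg _) (abs_le.2 ⟨hx.1.le, hx.2⟩)
  nlinarith [abs_nonneg (legendreP n x)]

lemma iter_pow (a k : ℕ) : iteratedDeriv k (fun x : ℝ => (x : ℂ) ^ a) =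
    fun x : ℝ => (a.descFactorial k : ℂ) * (x : ℂ) ^ (a - k) := by
  induction k with
  | zero => simp
  | succ k ih =>
    rw [iteratedDeriv_succ, ih]; ext x
    have h := ((hasDerivAt_pow (a - k) (x : ℂ)).comp_ofReal).const_mul (a.descFactorial k : ℂ)
    rw [h.deriv, Nat.descFactorial_succ, Nat.sub_sub]
    push_cast; ring

lemma iter_exp (t : ℝ) (k : ℕ) :
    iteratedDeriv k (fun x : ℝ => Complex.exp (Complex.I * ((t * x : ℝ) : ℂ))) =
    fun x : ℝ => (Complex.I * t) ^ k * Complex.exp (Complex.I * ((t * x : ℝ) : ℂ)) := by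
  induction k with
  | zero => simp
  | succ k ih =>
    rw [iteratedDeriv_succ, ih]; ext x
    have h0 : HasDerivAt (fun x : ℝ => Complex.I * ((t * x : ℝ) : ℂ)) (Complex.I * ((t * 1 : ℝ) : ℂ)) x :=
      (((hasDerivAt_id x).const_mul t).ofReal_comp).const_mul _
    rw [(h0.cexp.const_mul ((Complex.I * t) ^ k)).deriv]
    push_cast; ring

lemma cd_pow (a : ℕ) : ContDiff ℝ ⊤ (fun x : ℝ => (x : ℂ) ^ a) :=
  Complex.ofRealCLM.contDiff.pow a

lemma cd_exp (t : ℝ) : ContDiff ℝ ⊤ (fun x : ℝ => Complex.exp (Complex.I * ((t * x : ℝ) : ℂ))) :=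
  (contDiff_const.mul (Complex.ofRealCLM.contDiff.comp (contDiff_const.mul contDiff_id))).cexp

lemma coef_bound (p n a : ℕ) (ha : a ≤ p) (hp : p ≤ n) (c t : ℝ) (hc : 1 ≤ c) (ht : |t| ≤ c) :
    ‖coef n a t‖ ≤ 2 * 2 ^ a * ((c / 2) ^ n / (n - p).factorial) := by
  have h := legendre_ibp n (fun x : ℝ => (x : ℂ) ^ a * Complex.exp (Complex.I * ((t * x : ℝ) : ℂ)))
    ((cd_pow a).mul (cd_exp t))
    (∑ k ∈ Finset.range (n + 1), (n.choose k : ℝ) * a.descFactorial k * c ^ n) (fun x hx => by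
      have h1 := norm_iteratedFDeriv_mul_le (n := n) (N := ⊤) (cd_pow a) (cd_exp t) x le_top
      simp only [norm_iteratedFDeriv_eq_norm_iteratedDeriv, iter_pow, iter_exp] at h1
      refine h1.trans (Finset.sum_le_sum fun k _ => ?_)
      have hx1 : |x| ^ (a - k) ≤ 1 := pow_le_one₀ (abs_nonneg _) (abs_le.2 ⟨hx.1.le, hx.2⟩)
      rw [norm_mul, norm_mul, norm_exp_I, norm_pow, norm_pow, norm_mul, Complex.norm_I,
        Complex.norm_real, Complex.norm_real, Real.norm_eq_abs, Real.norm_eq_abs, one_mul, mul_one,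
        Complex.norm_natCast]
      have h2 : |t| ^ (n - k) ≤ c ^ n :=
        (pow_le_pow_left₀ (abs_nonneg _) ht _).trans (pow_le_pow_right₀ hc (Nat.sub_le _ _))
      calc _ ≤ (n.choose k : ℝ) * (a.descFactorial k * 1) * c ^ n := by gcongr
        _ = _ := by ring)
  refine h.trans ?_
  rw [← Finset.sum_mul]
  have hs : (∑ k ∈ Finset.range (n + 1), (n.choose k : ℝ) * a.descFactorial k) / n.factorial ≤
      2 ^ a / (n - p).factorial := by
    rw [Finset.sum_div]
    calc _ ≤ ∑ k ∈ Finset.range (n + 1), (a.choose k : ℝ) / (n - p).factorial := by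
          refine Finset.sum_le_sum fun k hk => ?_
          have hk' : k ≤ n := by simpa [Nat.lt_succ_iff] using hk
          by_cases hka : k ≤ a
          · have e1 : (n.choose k : ℝ) * k.factorial * (n - k).factorial = n.factorial := by
              exact_mod_cast Nat.choose_mul_factorial_mul_factorial hk'
            have e2 : (a.descFactorial k : ℝ) = k.factorial * a.choose k := by
              exact_mod_cast Nat.descFactorial_eq_factorial_mul_choose a k
            have e3 : ((n - p).factorial : ℝ) ≤ (n - k).factorial := by
              exact_mod_cast Nat.factorial_le (by omega)
            rw [div_le_div_iff₀ (by positivity) (by positivity), e2, ← e1]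
            calc _ = (n.choose k : ℝ) * k.factorial * a.choose k * (n - p).factorial := by ring
              _ ≤ (n.choose k : ℝ) * k.factorial * a.choose k * (n - k).factorial := by gcongr
              _ = _ := by ring
          · rw [Nat.descFactorial_eq_zero_iff_lt.2 (by omega)]
            simp; positivity
      _ = _ := by
          rw [← Finset.sum_div]
          congr 1
          have : ∑ k ∈ Finset.range (n + 1), a.choose k = 2 ^ a := by
            rw [← Nat.sum_range_choose]
            symm
            apply Finset.sum_subset
            · intro k; simp; omega
            · intro k _ hk
              exact Nat.choose_eq_zero_of_lt (by simpa using hk)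
          exact_mod_cast this
  calc _ = 2 * (c / 2) ^ n * ((∑ k ∈ Finset.range (n + 1), (n.choose k : ℝ) * a.descFactorial k) / n.factorial) := by
        rw [div_pow]; field_simp
    _ ≤ 2 * (c / 2) ^ n * (2 ^ a / (n - p).factorial) := by gcongr
    _ = _ := by ring

lemma fubini_one (V : Measure ℝ) [IsFiniteMeasure V] (N : Measure (ℝ × ℝ)) [IsFiniteMeasure N]
    (f : ℝ → ℂ) (hf : Integrable f V) (h : ℝ × ℝ → ℂ) (hh : Integrable h N)
    (t : ℝ × ℝ → ℝ) (ht : Continuous t) :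
    ∫ x, f x * ∫ ξ, Complex.exp (Complex.I * ((t ξ * x : ℝ) : ℂ)) * h ξ ∂N ∂V =
      ∫ ξ, (∫ x, f x * Complex.exp (Complex.I * ((t ξ * x : ℝ) : ℂ)) ∂V) * h ξ ∂N := by
  have hi : Integrable (Function.uncurry fun (x : ℝ) (ξ : ℝ × ℝ) =>
      f x * Complex.exp (Complex.I * ((t ξ * x : ℝ) : ℂ)) * h ξ) (V.prod N) := by
    have h0 : Integrable (fun z : ℝ × (ℝ × ℝ) => f z.1 * h z.2) (V.prod N) := hf.mul_prod hh
    have hE : Continuous fun z : ℝ × (ℝ × ℝ) => Complex.exp (Complex.I * ((t z.2 * z.1 : ℝ) : ℂ)) := by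
      fun_prop
    have h1 := h0.bdd_mul (c := 1) (f := fun z : ℝ × (ℝ × ℝ) =>
      Complex.exp (Complex.I * ((t z.2 * z.1 : ℝ) : ℂ))) hE.aestronglyMeasurable
      (Filter.Eventually.of_forall fun z => (norm_exp_I _).le)
    refine h1.congr (Filter.Eventually.of_forall fun z => ?_)
    simp only [Function.uncurry]; ring
  have := integral_integral_swap hi
  simp only [integral_mul_const] at this
  rw [← this]
  refine integral_congr_ae (Filter.Eventually.of_forall fun x => ?_)
  simp only [mul_assoc]
  rw [integral_const_mul]

lemma coef_cont (n a : ℕ) : Continuous (coef n a) := by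
  unfold coef
  have := legendreP_cont n
  apply intervalIntegral.continuous_parametric_intervalIntegral_of_continuous'
  simp only [Function.uncurry_def]
  fun_prop

lemma coef_set (n a : ℕ) (t : ℝ) : ∫ x in Set.Icc (-1:ℝ) 1, ((x : ℂ) ^ a * (legendreP n x : ℂ)) *
    Complex.exp (Complex.I * ((t * x : ℝ) : ℂ)) = coef n a t := by
  rw [coef, intervalIntegral.integral_of_le (by norm_num), integral_Icc_eq_integral_Ioc]
  congr 1; ext x; ring

lemma fubini_two (N : Measure (ℝ × ℝ)) [IsFiniteMeasure N] (w : ℝ × ℝ → ℂ) (hw : Measurable w)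
    (hw1 : ∀ ξ, ‖w ξ‖ = 1) (m n a b : ℕ) :
    ∫ x in Set.Icc (-1 : ℝ) 1, ∫ y in Set.Icc (-1 : ℝ) 1,
      ((x : ℂ) ^ a * (y : ℂ) ^ b *
        ∫ ξ, Complex.exp (Complex.I * ((ξ.1 * x + ξ.2 * y : ℝ) : ℂ)) * w ξ ∂N)
        * (legendreP m x : ℂ) * (legendreP n y : ℂ) =
    ∫ ξ, coef m a ξ.1 * (coef n b ξ.2 * w ξ) ∂N := by
  have hI : ∀ k d : ℕ, Integrable (fun x : ℝ => (x : ℂ) ^ d * (legendreP k x : ℂ))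
      (volume.restrict (Set.Icc (-1:ℝ) 1)) := fun k d => by
    have := legendreP_cont k
    exact (Continuous.continuousOn (by fun_prop)).integrableOn_compact isCompact_Icc
  have hwI : Integrable w N := Integrable.of_bound hw.aestronglyMeasurable 1
    (Filter.Eventually.of_forall fun z => (hw1 z).le)
  have hin : ∀ x : ℝ, ∫ y in Set.Icc (-1 : ℝ) 1,
      ((x : ℂ) ^ a * (y : ℂ) ^ b *
        ∫ ξ, Complex.exp (Complex.I * ((ξ.1 * x + ξ.2 * y : ℝ) : ℂ)) * w ξ ∂N)
        * (legendreP m x : ℂ) * (legendreP n y : ℂ) =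
      ((x : ℂ) ^ a * (legendreP m x : ℂ)) *
        ∫ ξ, Complex.exp (Complex.I * ((ξ.1 * x : ℝ) : ℂ)) * (coef n b ξ.2 * w ξ) ∂N := by
    intro x
    have hE : Continuous fun ξ : ℝ × ℝ => Complex.exp (Complex.I * ((ξ.1 * x : ℝ) : ℂ)) := by
      fun_prop
    have hh : Integrable (fun ξ : ℝ × ℝ =>
        Complex.exp (Complex.I * ((ξ.1 * x : ℝ) : ℂ)) * w ξ) N :=
      hwI.bdd_mul (c := 1) hE.aestronglyMeasurable
        (Filter.Eventually.of_forall fun z => (norm_exp_I _).le)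
    have h1 := fubini_one (volume.restrict (Set.Icc (-1:ℝ) 1)) N _ (hI n b) _ hh Prod.snd
      continuous_snd
    simp only [coef_set] at h1
    have e : ∀ ξ : ℝ × ℝ, Complex.exp (Complex.I * ((ξ.1 * x : ℝ) : ℂ)) * (coef n b ξ.2 * w ξ) =
      coef n b ξ.2 * (Complex.exp (Complex.I * ((ξ.1 * x : ℝ) : ℂ)) * w ξ) := fun ξ => by ring
    simp only [e]
    rw [← h1, ← integral_const_mul]
    congr 1; ext y
    have e2 : ∀ ξ : ℝ × ℝ, Complex.exp (Complex.I * ((ξ.1 * x + ξ.2 * y : ℝ) : ℂ)) * w ξ =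
      Complex.exp (Complex.I * ((ξ.2 * y : ℝ) : ℂ)) *
        (Complex.exp (Complex.I * ((ξ.1 * x : ℝ) : ℂ)) * w ξ) := fun ξ => by
      rw [← mul_assoc, ← Complex.exp_add]; push_cast; ring_nf
    simp only [e2]
    ring
  simp only [hin]
  have hh : Integrable (fun ξ : ℝ × ℝ => coef n b ξ.2 * w ξ) N :=
    hwI.bdd_mul (c := 2) ((coef_cont n b).comp continuous_snd).aestronglyMeasurable
        (Filter.Eventually.of_forall fun z => coef_le_two _ _ _)
  have h1 := fubini_one (volume.restrict (Set.Icc (-1:ℝ) 1)) N _ (hI m a) _ hh Prod.fst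
      continuous_fst
  simp only [coef_set] at h1
  exact h1

lemma hcont (N : Measure (ℝ × ℝ)) [IsFiniteMeasure N] (w : ℝ × ℝ → ℂ) (hw : Measurable w)
    (hw1 : ∀ ξ, ‖w ξ‖ = 1) : Continuous fun z : ℝ × ℝ =>
      ∫ ξ, Complex.exp (Complex.I * ((ξ.1 * z.1 + ξ.2 * z.2 : ℝ) : ℂ)) * w ξ ∂N := by
  apply continuous_of_dominated (bound := fun _ => 1)
  · intro z
    have hE : Continuous fun ξ : ℝ × ℝ =>
      Complex.exp (Complex.I * ((ξ.1 * z.1 + ξ.2 * z.2 : ℝ) : ℂ)) := by fun_prop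
    exact hE.aestronglyMeasurable.mul hw.aestronglyMeasurable
  · intro z
    exact Filter.Eventually.of_forall fun ξ => by rw [norm_mul, norm_exp_I, hw1, one_mul]
  · exact integrable_const _
  · exact Filter.Eventually.of_forall fun ξ => by fun_prop

lemma total_bound (s : Finset (ℕ × ℕ)) (S : Set (ℝ × ℝ)) 
    (ν : ℕ × ℕ → Measure (ℝ × ℝ)) (w : ℕ × ℕ → (ℝ × ℝ) → ℂ)
    (hν : ∀ α, IsFiniteMeasure (ν α)) (hw : ∀ α, Measurable (w α)) (hw1 : ∀ α ξ, ‖w α ξ‖ = 1)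
    (M : ℝ) (hM : ∀ α ∈ s, (ν α S).toReal ≤ M) (m n : ℕ) (B : ℝ) (hB0 : 0 ≤ B)
    (hB : ∀ α ∈ s, ∀ ξ ∈ S, ‖coef m α.1 ξ.1‖ * ‖coef n α.2 ξ.2‖ ≤ B) :
    ‖∫ x in Set.Icc (-1 : ℝ) 1, ∫ y in Set.Icc (-1 : ℝ) 1,
      (∑ α ∈ s, (x : ℂ) ^ α.1 * (y : ℂ) ^ α.2 *
        ∫ ξ in S, Complex.exp (Complex.I * ((ξ.1 * x + ξ.2 * y : ℝ) : ℂ)) * w α ξ ∂(ν α))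
        * (legendreP m x : ℂ) * (legendreP n y : ℂ)‖ ≤ s.card * (B * M) := by
  have hc : ∀ α, Continuous fun z : ℝ × ℝ => ((z.1 : ℂ) ^ α.1 * (z.2 : ℂ) ^ α.2 *
        ∫ ξ in S, Complex.exp (Complex.I * ((ξ.1 * z.1 + ξ.2 * z.2 : ℝ) : ℂ)) * w α ξ ∂(ν α))
        * (legendreP m z.1 : ℂ) * (legendreP n z.2 : ℂ) := by
    intro α
    have h1 := hcont ((ν α).restrict S) (w α) (hw α) (hw1 α)
    have h2 := legendreP_cont m
    have h3 := legendreP_cont n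
    fun_prop
  simp only [Finset.sum_mul]
  have e1 : ∀ x : ℝ, ∫ y in Set.Icc (-1 : ℝ) 1, ∑ α ∈ s, ((x : ℂ) ^ α.1 * (y : ℂ) ^ α.2 *
        ∫ ξ in S, Complex.exp (Complex.I * ((ξ.1 * x + ξ.2 * y : ℝ) : ℂ)) * w α ξ ∂(ν α))
        * (legendreP m x : ℂ) * (legendreP n y : ℂ) =
      ∑ α ∈ s, ∫ y in Set.Icc (-1 : ℝ) 1, ((x : ℂ) ^ α.1 * (y : ℂ) ^ α.2 *
        ∫ ξ in S, Complex.exp (Complex.I * ((ξ.1 * x + ξ.2 * y : ℝ) : ℂ)) * w α ξ ∂(ν α))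
        * (legendreP m x : ℂ) * (legendreP n y : ℂ) := by
    intro x
    apply integral_finsetSum
    intro α _
    exact ((hc α).comp (Continuous.prodMk_right x)).continuousOn.integrableOn_compact isCompact_Icc
  simp only [e1]
  rw [integral_finsetSum]
  swap
  · intro α _
    exact (continuous_parametric_integral_of_continuous
      (f := fun x y : ℝ => ((x : ℂ) ^ α.1 * (y : ℂ) ^ α.2 *
        ∫ ξ in S, Complex.exp (Complex.I * ((ξ.1 * x + ξ.2 * y : ℝ) : ℂ)) * w α ξ ∂(ν α))
        * (legendreP m x : ℂ) * (legendreP n y : ℂ)) (hc α)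
      isCompact_Icc).continuousOn.integrableOn_compact isCompact_Icc
  refine (norm_sum_le _ _).trans ?_
  rw [← nsmul_eq_mul]
  refine Finset.sum_le_card_nsmul _ _ _ fun α hα => ?_
  rw [fubini_two ((ν α).restrict S) (w α) (hw α) (hw1 α)]
  have h1 := norm_setIntegral_le_of_norm_le_const (μ := ν α) (s := S) (C := B)
    (f := fun ξ => coef m α.1 ξ.1 * (coef n α.2 ξ.2 * w α ξ)) (measure_lt_top _ _)
    (fun ξ hξ => by
      rw [norm_mul, norm_mul, hw1, mul_one]; exact hB α hα ξ hξ)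
  exact h1.trans (mul_le_mul_of_nonneg_left (hM α hα) hB0)

/-- Decay of the Legendre coefficients of a function of the form
`φ(x,y) = ∑_{|α| ≤ p} (x,y)^α ∫_{[-c,c]²} e^{i(ξ₁x+ξ₂y)} dμ_α(ξ)`, where each complex
Radon measure `μ_α` on `[-c,c]²` is encoded by its polar decomposition `w_α · ν_α`
(so `|μ_α|([-c,c]²) = ν_α([-c,c]²)`), and `M = max_{|α| ≤ p} |μ_α|([-c,c]²)`. -/
theorem legendre_coefficient_decay (p : ℕ) :
    ∃ C : ℝ, ∀ c : ℝ, 1 ≤ c →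
      ∀ (ν : ℕ × ℕ → Measure (ℝ × ℝ)) (w : ℕ × ℕ → (ℝ × ℝ) → ℂ),
        (∀ α, IsFiniteMeasure (ν α)) →
        (∀ α, ν α (Set.Icc ((-c, -c) : ℝ × ℝ) ((c, c) : ℝ × ℝ))ᶜ = 0) →
        (∀ α, Measurable (w α)) →
        (∀ α ξ, ‖w α ξ‖ = 1) →
        ∀ φ : ℝ × ℝ → ℂ,
        (∀ z : ℝ × ℝ, φ z =
          ∑ α ∈ multiIdx p,
            (z.1 : ℂ) ^ α.1 * (z.2 : ℂ) ^ α.2 *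
              ∫ ξ in Set.Icc ((-c, -c) : ℝ × ℝ) ((c, c) : ℝ × ℝ),
                Complex.exp (Complex.I * ((ξ.1 * z.1 + ξ.2 * z.2 : ℝ) : ℂ)) * w α ξ ∂(ν α)) →
        ∀ M : ℝ,
        IsGreatest {r : ℝ | ∃ α ∈ multiIdx p,
          r = ((ν α) (Set.Icc ((-c, -c) : ℝ × ℝ) ((c, c) : ℝ × ℝ))).toReal} M →
        ∀ m n : ℕ,
          (p ≤ min m n →
            ‖∫ x in Set.Icc (-1 : ℝ) 1, ∫ y in Set.Icc (-1 : ℝ) 1,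
                φ (x, y) * (legendreP m x : ℂ) * (legendreP n y : ℂ)‖ ≤
              C * M * (c / 2) ^ (m + n + p) /
                (Real.Gamma ((m : ℝ) - p + 1) * Real.Gamma ((n : ℝ) - p + 1))) ∧
          (p ≤ max m n →
            ‖∫ x in Set.Icc (-1 : ℝ) 1, ∫ y in Set.Icc (-1 : ℝ) 1,
                φ (x, y) * (legendreP m x : ℂ) * (legendreP n y : ℂ)‖ ≤
              C * M * (c / 2) ^ (max m n + p) / Real.Gamma ((max m n : ℝ) - p + 1)) := by
  have hcard : (0:ℝ) ≤ (multiIdx p).card := Nat.cast_nonneg _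
  refine ⟨(multiIdx p).card * (4 * 4 ^ p), ?_⟩
  intro c hc ν w hν _ hw hw1 φ hφ M hM m n
  have hM' : ∀ α ∈ multiIdx p,
      (ν α (Set.Icc ((-c, -c) : ℝ × ℝ) ((c, c) : ℝ × ℝ))).toReal ≤ M :=
    fun α hα => hM.2 ⟨α, hα, rfl⟩
  have hM0 : 0 ≤ M := by
    obtain ⟨α, _, h⟩ := hM.1
    rw [h]; exact ENNReal.toReal_nonneg
  have hidx : ∀ α ∈ multiIdx p, α.1 + α.2 ≤ p := fun α hα => (Finset.mem_filter.1 hα).2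
  have hξ : ∀ ξ ∈ Set.Icc ((-c, -c) : ℝ × ℝ) ((c, c) : ℝ × ℝ), |ξ.1| ≤ c ∧ |ξ.2| ≤ c :=
    fun ξ h => ⟨abs_le.2 ⟨h.1.1, h.2.1⟩, abs_le.2 ⟨h.1.2, h.2.2⟩⟩
  have hg : ∀ k : ℕ, p ≤ k → Real.Gamma ((k : ℝ) - p + 1) = (k - p).factorial := by
    intro k hk
    rw [← Nat.cast_sub hk, Real.Gamma_nat_eq_factorial]
  have hc0 : (0:ℝ) ≤ c / 2 := by linarith
  have hcp : 1 ≤ 2 ^ p * (c / 2) ^ p := by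
    rw [← mul_pow]; exact one_le_pow₀ (by linarith)
  have h2 : ∀ α ∈ multiIdx p, (2:ℝ) ^ α.1 * 2 ^ α.2 ≤ 2 ^ p := fun α hα => by
    rw [← pow_add]; exact pow_le_pow_right₀ (by norm_num) (hidx α hα)
  have h4 : (4:ℝ) ^ p = 2 ^ p * 2 ^ p := by rw [← mul_pow]; norm_num
  simp only [hφ]
  constructor
  · intro hp
    have hpm : p ≤ m := hp.trans (min_le_left _ _)
    have hpn : p ≤ n := hp.trans (min_le_right _ _)
    rw [hg m hpm, hg n hpn]
    have hR : 0 ≤ (c / 2) ^ (m + n) / ((m - p).factorial * (n - p).factorial : ℝ) := by positivity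
    refine (total_bound (multiIdx p) _ ν w hν hw hw1 M hM' m n
      (4 * 2 ^ p * ((c / 2) ^ (m + n) / ((m - p).factorial * (n - p).factorial)))
      (by positivity) ?_).trans ?_
    · intro α hα ξ hx
      have b1 := coef_bound p m α.1 (by have := hidx α hα; omega) hpm c ξ.1 hc (hξ ξ hx).1
      have b2 := coef_bound p n α.2 (by have := hidx α hα; omega) hpn c ξ.2 hc (hξ ξ hx).2
      calc _ ≤ _ := mul_le_mul b1 b2 (norm_nonneg _) (by positivity)
        _ = 4 * (2 ^ α.1 * 2 ^ α.2) *
            ((c / 2) ^ (m + n) / ((m - p).factorial * (n - p).factorial)) := by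
          rw [pow_add]; field_simp; ring
        _ ≤ _ := by have := h2 α hα; gcongr
    · calc _ = (multiIdx p).card * (4 * 2 ^ p *
            ((c / 2) ^ (m + n) / ((m - p).factorial * (n - p).factorial)) * M) * 1 := by ring
        _ ≤ (multiIdx p).card * (4 * 2 ^ p *
            ((c / 2) ^ (m + n) / ((m - p).factorial * (n - p).factorial)) * M) *
            (2 ^ p * (c / 2) ^ p) := by gcongr
        _ = _ := by rw [pow_add _ (m + n) p, h4]; ring
  · intro hp
    rw [← Nat.cast_max, hg _ hp]
    set K := max m n with hK
    refine (total_bound (multiIdx p) _ ν w hν hw hw1 M hM' m n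
      (4 * 2 ^ p * ((c / 2) ^ K / (K - p).factorial)) (by positivity) ?_).trans ?_
    · intro α hα ξ hx
      have hR : 0 ≤ (c / 2) ^ K / ((K - p).factorial : ℝ) := by positivity
      have ha : (2:ℝ) ^ α.1 ≤ 2 ^ p :=
        pow_le_pow_right₀ (by norm_num) (by have := hidx α hα; omega)
      have hb : (2:ℝ) ^ α.2 ≤ 2 ^ p :=
        pow_le_pow_right₀ (by norm_num) (by have := hidx α hα; omega)
      rcases le_total n m with h | h
      · have e : K = m := max_eq_left h
        rw [e] at hp hR ⊢
        have b1 := coef_bound p m α.1 (by have := hidx α hα; omega) hp c ξ.1 hc (hξ ξ hx).1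
        calc _ ≤ _ := mul_le_mul b1 (coef_le_two n α.2 ξ.2) (norm_nonneg _) (by positivity)
          _ = 4 * 2 ^ α.1 * ((c / 2) ^ m / (m - p).factorial) := by ring
          _ ≤ _ := by gcongr
      · have e : K = n := max_eq_right h
        rw [e] at hp hR ⊢
        have b1 := coef_bound p n α.2 (by have := hidx α hα; omega) hp c ξ.2 hc (hξ ξ hx).2
        calc _ ≤ _ := mul_le_mul (coef_le_two m α.1 ξ.1) b1 (norm_nonneg _) (by norm_num)
          _ = 4 * 2 ^ α.2 * ((c / 2) ^ n / (n - p).factorial) := by ring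
          _ ≤ _ := by gcongr
    · calc _ = (multiIdx p).card * (4 * 2 ^ p *
            ((c / 2) ^ K / (K - p).factorial) * M) * 1 := by ring
        _ ≤ (multiIdx p).card * (4 * 2 ^ p *
            ((c / 2) ^ K / (K - p).factorial) * M) * (2 ^ p * (c / 2) ^ p) := by gcongr
        _ = _ := by rw [pow_add _ K p, h4]; ring
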